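/- Let n ≥ 6 be an integer and let G be a connected simple graph on n vertices such that the multiplicity of the largest distance Laplacian eigenvalue of G equals n−3. Then the complement of G is disconnected; equivalently, G is the join of two nonempty graphs. -/

import Mathlib

/-!
Let `L` be the distance Laplacian of a connected graph on `n` vertices, `λ` its largest eigenvalue
and `J` the all-ones matrix. Since `n ≤ λ`, the matrix `K = λ I - L - J` is positive semidefinite.
Off the diagonal its entries are `d(u, v) - 1`, so it is the Gram matrix of vectors attached to the
vertices, with orthogonal vectors exactly for adjacent vertices. An eigenspace for `λ` of dimension
at least `n - 3` contains a nonzero vector supported on any four given vertices, and its entries sum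
to zero: the vectors all lie in an affine plane.

If both the graph and its complement are connected, the graph contains an induced path on four
vertices (Seinsche). Planarity determines the Gram matrix of such a path up to a few parameters and
turns the distances from a further vertex to the path into an integer solution of two equations in
these parameters. The rows of `K` have equal sums, which ties the diagonal entries on the path to
these distances; the resulting equations leave room for at most one further vertex.
-/

open Matrix

/-- The distance Laplacian matrix of a graph: diagonal entries are the transmissions
`Tr(v) = ∑ u, d(v,u)`, off-diagonal entries are `-d(u,v)`. -/
noncomputable def distLaplacian {V : Type*} [Fintype V] [DecidableEq V]
    (G : SimpleGraph V) : Matrix V V ℝ :=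
  Matrix.of fun i j => if i = j then ∑ k : V, (G.dist i k : ℝ) else -(G.dist i j : ℝ)

/-- The multiplicity of `μ` as an eigenvalue of `M`, i.e. the dimension of the
corresponding eigenspace. -/
noncomputable def eigMult {V : Type*} [Fintype V] (M : Matrix V V ℝ) (μ : ℝ) : ℕ :=
  Module.finrank ℝ (Module.End.eigenspace M.mulVecLin μ)

/-- The largest eigenvalue of a matrix. -/
noncomputable def lambdaMax {V : Type*} [Fintype V] (M : Matrix V V ℝ) : ℝ :=
  sSup {μ : ℝ | Module.End.HasEigenvalue M.mulVecLin μ}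

/-- The transmission of a vertex. -/
noncomputable def transmission {V : Type*} [Fintype V] (G : SimpleGraph V) (v : V) : ℕ :=
  ∑ u : V, G.dist v u

section Graph

open SimpleGraph

variable {V : Type*} {G : SimpleGraph V}

lemma exists_adj_mem_notMem (hG : G.Preconnected) {s : Set V} (hs : s.Nonempty)
    (hs' : s ≠ Set.univ) : ∃ a ∈ s, ∃ b ∉ s, G.Adj a b := by
  obtain ⟨a, ha⟩ := hs
  obtain ⟨b, hb⟩ := (Set.ne_univ_iff_exists_notMem s).mp hs'
  obtain ⟨p⟩ := hG a b
  obtain ⟨d, -, hfst, hsnd⟩ := p.exists_boundary_dart s ha hb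
  exact ⟨d.fst, hfst, d.snd, hsnd, d.adj⟩

lemma union_ne_univ_of_isCompleteBetween (hG : Gᶜ.Preconnected) {A B : Set V} (hA : A.Nonempty)
    (hB : B.Nonempty) (h : G.IsCompleteBetween A B) : A ∪ B ≠ Set.univ := by
  intro hAB
  obtain ⟨b₀, hb₀⟩ := hB
  obtain ⟨a, ha, b, hb, hab⟩ := exists_adj_mem_notMem hG hA
    ((Set.ne_univ_iff_exists_notMem A).mpr ⟨b₀, h.disjoint.notMem_of_mem_right hb₀⟩)
  have hbB : b ∈ B := (hAB.symm ▸ Set.mem_univ b : b ∈ A ∪ B).resolve_left hb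
  exact ((compl_adj ..).mp hab).2 (h ha hbB)

lemma exists_isCompleteBetween_of_not_compl_connected [Nonempty V] (hG : ¬ Gᶜ.Connected) :
    ∃ A B : Set V, A.Nonempty ∧ B.Nonempty ∧ A ∩ B = ∅ ∧ A ∪ B = Set.univ ∧
      G.IsCompleteBetween A B := by
  have hG' : ¬ Gᶜ.Preconnected := fun h => hG ⟨h⟩
  obtain ⟨a, b, hab⟩ : ∃ a b, ¬ Gᶜ.Reachable a b := by simpa [Preconnected] using hG'
  refine ⟨{v | Gᶜ.Reachable a v}, {v | Gᶜ.Reachable a v}ᶜ, ⟨a, .refl a⟩, ⟨b, hab⟩,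
    Set.inter_compl_self _, Set.union_compl_self _, fun u hu v hv => ?_⟩
  by_contra huv
  have hne : u ≠ v := fun h => hv (h ▸ hu)
  exact hv (Reachable.trans hu (Adj.reachable ((compl_adj ..).mpr ⟨hne, huv⟩)))

lemma abs_dist_sub_dist_le_one_of_adj {u v : V} (h : G.Adj u v) (w : V) :
    |(G.dist u w - G.dist v w : ℤ)| ≤ 1 := by
  have := h.diff_dist_adj (u := w)
  rw [G.dist_comm, G.dist_comm (u := w) (v := u)] at this
  rw [abs_le]
  lia

lemma dist_eq_two_of_adj_of_adj {u v w : V} (huw : G.Adj u w) (hwv : G.Adj w v) (hne : u ≠ v)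
    (huv : ¬ G.Adj u v) : G.dist u v = 2 := by
  rw [SimpleGraph.dist, edist_eq_two_iff.mpr ⟨hne, huv, w, huw, hwv.symm⟩]
  rfl

lemma pathGraph_four_isIndContained {v₀ v₁ v₂ v₃ : V} (h₀₁ : G.Adj v₀ v₁) (h₁₂ : G.Adj v₁ v₂)
    (h₂₃ : G.Adj v₂ v₃) (h₀₂ : ¬ G.Adj v₀ v₂) (h₁₃ : ¬ G.Adj v₁ v₃) (h₀₃ : ¬ G.Adj v₀ v₃) :
    (pathGraph 4).IsIndContained G := by
  let φ : Fin 4 → V := ![v₀, v₁, v₂, v₃]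
  have hadj (i j : Fin 4) : G.Adj (φ i) (φ j) ↔ (pathGraph 4).Adj i j := by
    fin_cases i <;> fin_cases j <;> simp [φ, pathGraph_adj, *, adj_comm]
  have hinj : ∀ i j : Fin 4,
      (∀ k, (pathGraph 4).Adj i k ↔ (pathGraph 4).Adj j k) → i = j := by
    simp only [pathGraph_adj]
    decide
  exact ⟨⟨⟨φ, fun i j hij => hinj i j fun k => by rw [← hadj, ← hadj, hij]⟩, hadj _ _⟩⟩

theorem pathGraph_four_isIndContained_of_connected_of_compl_connected [Finite V] [Nontrivial V]
    (hG : G.Connected) (hGc : Gᶜ.Connected) : (pathGraph 4).IsIndContained G := by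
  let P : Set V → Prop := fun S =>
    ∃ A B : Set V, A.Nonempty ∧ B.Nonempty ∧ G.IsCompleteBetween A B ∧ A ∪ B = S
  obtain ⟨S, hS⟩ : ∃ S, Maximal P S := by
    obtain ⟨v⟩ := hG.nonempty
    obtain ⟨w, hvw⟩ := hG.preconnected.exists_adj_of_nontrivial v
    exact exists_maximal_of_wellFoundedGT P
      ⟨_, {v}, {w}, by simp, by simp, by simpa [IsCompleteBetween], rfl⟩
  obtain ⟨A, B, hA, hB, hAB, rfl⟩ := hS.prop
  obtain ⟨s, hs, w, hw, hsw⟩ := exists_adj_mem_notMem hG.preconnected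
    (hA.mono Set.subset_union_left) (union_ne_univ_of_isCompleteBetween hGc.preconnected hA hB hAB)
  obtain ⟨a, ha, b, hb, hwa, hwb, hab⟩ :
      ∃ a ∈ A ∪ B, ∃ b ∈ A ∪ B, G.Adj w a ∧ ¬ G.Adj w b ∧ ¬ G.Adj a b := by
    by_contra! h
    refine hw (hS.mem_of_prop_insert ⟨{a ∈ A ∪ B | G.Adj w a}, insert w {b ∈ A ∪ B | ¬ G.Adj w b},
      ⟨s, hs, hsw.symm⟩, Set.insert_nonempty .., ?_, ?_⟩)
    · rintro a ⟨ha, hwa⟩ b (rfl | ⟨hb, hwb⟩)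
      exacts [hwa.symm, h a ha b hb hwa hwb]
    · ext x
      simp only [Set.mem_union, Set.mem_insert_iff, Set.mem_ofPred_eq]
      tauto
  wlog haA : a ∈ A generalizing A B
  · refine this B A hB hA hAB.symm ?_ ?_ ?_ ?_ ?_ (ha.resolve_left haA)
    all_goals rwa [Set.union_comm]
  have hbA : b ∈ A := hb.resolve_right fun hbB => hab (hAB haA hbB)
  obtain ⟨d, hd, hwd⟩ : ∃ d ∈ B, ¬ G.Adj w d := by
    by_contra! h
    refine hw (hS.mem_of_prop_insert
      ⟨insert w A, B, Set.insert_nonempty .., hB, ?_, Set.insert_union⟩)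
    rintro x (rfl | hx) y hy
    exacts [h y hy, hAB hx hy]
  exact pathGraph_four_isIndContained hwa (hAB haA hd) (hAB hbA hd).symm hwd hab hwb

end Graph

section Spectral

lemma apply_comm_of_posSemidef {V : Type*} {K : Matrix V V ℝ} (hK : K.PosSemidef) (u v : V) :
    K u v = K v u :=
  hK.isHermitian.apply v u

lemma sq_apply_le_of_posSemidef {V : Type*} {K : Matrix V V ℝ} (hK : K.PosSemidef) (u v : V) :
    K u v ^ 2 ≤ K u u * K v v := by
  have hdet := (hK.submatrix ![u, v]).det_nonneg
  simp only [det_fin_two, submatrix_apply, cons_val_zero, cons_val_one,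
    apply_comm_of_posSemidef hK v u] at hdet
  linarith

variable {V : Type*} [Fintype V] {M : Matrix V V ℝ}

lemma le_lambdaMax {κ : ℝ} {y : V → ℝ} (hy : y ≠ 0) (h : M *ᵥ y = κ • y) : κ ≤ lambdaMax M :=
  le_csSup (Module.End.finite_hasEigenvalue _).bddAbove
    (Module.End.hasEigenvalue_of_hasEigenvector ⟨Module.End.mem_eigenspace_iff.mpr h, hy⟩)

lemma posSemidef_of_eigenvalue_nonneg (hM : M.IsHermitian)
    (h : ∀ (κ : ℝ) (y : V → ℝ), y ≠ 0 → M *ᵥ y = κ • y → 0 ≤ κ) : M.PosSemidef := by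
  classical
  exact hM.posSemidef_iff_eigenvalues_nonneg.mpr fun i =>
    h _ _ (by simpa using hM.eigenvectorBasis.orthonormal.ne_zero i) (hM.mulVec_eigenvectorBasis i)

lemma sum_mulVec_eq_zero (hM : M.IsSymm) (hM1 : M *ᵥ 1 = 0) (y : V → ℝ) :
    ∑ i, (M *ᵥ y) i = 0 := by
  rw [← one_dotProduct, dotProduct_mulVec, ← mulVec_transpose, hM.eq, hM1, zero_dotProduct]

lemma posSemidef_lambdaMax_smul_one_sub [DecidableEq V] (hM : M.IsSymm) :
    (lambdaMax M • 1 - M).PosSemidef := by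
  refine posSemidef_of_eigenvalue_nonneg ?_ fun κ y hy h => ?_
  · simpa [IsHermitian, conjTranspose_eq_transpose_of_trivial] using hM.eq
  · have hMy : M *ᵥ y = (lambdaMax M - κ) • y := by
      rw [sub_mulVec, smul_mulVec, one_mulVec] at h
      rw [sub_smul, ← h, sub_sub_cancel]
    linarith [le_lambdaMax hy hMy]

lemma card_mul_apply_self_le (hM : M.IsSymm) (hM1 : M *ᵥ 1 = 0) (v : V) :
    Fintype.card V * M v v ≤ (Fintype.card V - 1) * lambdaMax M := by
  classical
  set n : ℝ := (Fintype.card V : ℝ) with hn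
  have hn0 : 0 < n := Nat.cast_pos.mpr (Fintype.card_pos_iff.mpr ⟨v⟩)
  let x : V → ℝ := n • Pi.single v 1 - 1
  have hMx : M *ᵥ x = n • M.col v := by
    simp [x, mulVec_sub, mulVec_smul, hM1]
  have hquad : x ⬝ᵥ M *ᵥ x = n ^ 2 * M v v := by
    have hcol : 1 ⬝ᵥ M.col v = 0 := by
      rw [← mulVec_single_one, one_dotProduct, sum_mulVec_eq_zero hM hM1]
    simp only [hMx, dotProduct_smul, x, sub_dotProduct, smul_dotProduct, hcol,
      single_one_dotProduct, col_apply, smul_eq_mul]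
    ring
  have hnorm : x ⬝ᵥ x = n * (n - 1) := by
    simp [x, sub_dotProduct, dotProduct_sub, ← hn]
  have hnonneg : 0 ≤ lambdaMax M * (x ⬝ᵥ x) - x ⬝ᵥ M *ᵥ x := by
    simpa [sub_mulVec, smul_mulVec, dotProduct_sub] using
      (posSemidef_lambdaMax_smul_one_sub hM).dotProduct_mulVec_nonneg x
  rw [hnorm, hquad] at hnonneg
  nlinarith

variable [DecidableEq V]

/-- The matrix `λ I - M - J`, where `λ` is the largest eigenvalue of `M` and `J` is the all-ones
matrix. For the distance Laplacian it is the Gram matrix of a family of vectors, with the entries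
`d(u, v) - 1` off the diagonal. -/
noncomputable def lambdaMaxGram (M : Matrix V V ℝ) : Matrix V V ℝ :=
  lambdaMax M • 1 - M - Matrix.of fun _ _ => 1

lemma lambdaMaxGram_apply (M : Matrix V V ℝ) (u v : V) :
    lambdaMaxGram M u v = (if u = v then lambdaMax M else 0) - M u v - 1 := by
  simp [lambdaMaxGram, one_apply]

lemma lambdaMaxGram_mulVec_apply (M : Matrix V V ℝ) (y : V → ℝ) (u : V) :
    (lambdaMaxGram M *ᵥ y) u = lambdaMax M * y u - (M *ᵥ y) u - ∑ v, y v := by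
  have hJ : (Matrix.of fun _ _ : V => (1 : ℝ)) *ᵥ y = fun _ => ∑ v, y v := by
    ext
    simp [mulVec, dotProduct]
  simp [lambdaMaxGram, sub_mulVec, smul_mulVec, hJ]

lemma posSemidef_lambdaMaxGram (hM : M.IsSymm) (hM1 : M *ᵥ 1 = 0)
    (hcard : Fintype.card V ≤ lambdaMax M) : (lambdaMaxGram M).PosSemidef := by
  refine posSemidef_of_eigenvalue_nonneg ?_ fun κ y hy h => ?_
  · ext u v
    simp [lambdaMaxGram_apply, hM.apply u v, eq_comm]
  have hrow (u : V) : lambdaMax M * y u - (M *ᵥ y) u - ∑ v, y v = κ * y u := by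
    rw [← lambdaMaxGram_mulVec_apply, h, Pi.smul_apply, smul_eq_mul]
  by_cases hsum : ∑ v, y v = 0
  · have hMy : M *ᵥ y = (lambdaMax M - κ) • y := by
      ext u
      simp only [Pi.smul_apply, smul_eq_mul]
      linarith [hrow u]
    linarith [le_lambdaMax hy hMy]
  · have htotal : (lambdaMax M - Fintype.card V) * ∑ v, y v = κ * ∑ v, y v := by
      have := Finset.sum_congr rfl fun u (_ : u ∈ Finset.univ) => hrow u
      simp only [Finset.sum_sub_distrib, ← Finset.mul_sum, sum_mulVec_eq_zero hM hM1,
        Finset.sum_const, Finset.card_univ, nsmul_eq_mul] at this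
      linarith
    linarith [mul_right_cancel₀ hsum htotal]

lemma exists_affine_dependence (hM : M.IsSymm) (hM1 : M *ᵥ 1 = 0) (hpos : 0 < lambdaMax M)
    {ι : Type*} [Fintype ι] {v : ι → V} (hv : v.Injective)
    (hcard : Fintype.card V < eigMult M (lambdaMax M) + Fintype.card ι) :
    ∃ z : ι → ℝ, z ≠ 0 ∧ ∑ i, z i = 0 ∧ ∀ u, ∑ i, lambdaMaxGram M u (v i) * z i = 0 := by
  let extension : (ι → ℝ) →ₗ[ℝ] V → ℝ := Function.ExtendByZero.linearMap ℝ v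
  have hext (z : ι → ℝ) (i : ι) : extension z (v i) = z i := hv.extend_apply z 0 i
  have hinj : Function.Injective extension := fun z z' h => funext fun i => by
    rw [← hext z, h, hext]
  obtain ⟨y, hy, ⟨z, rfl⟩, hy0⟩ : ∃ y ∈ Module.End.eigenspace M.mulVecLin (lambdaMax M),
      y ∈ LinearMap.range extension ∧ y ≠ 0 := by
    by_contra! h
    have hdim := Submodule.finrank_add_finrank_le_of_disjoint (Submodule.disjoint_def.mpr h)
    rw [LinearMap.finrank_range_of_inj hinj, Module.finrank_fintype_fun_eq_card,
      Module.finrank_fintype_fun_eq_card] at hdim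
    exact hdim.not_gt hcard
  have hMy : M *ᵥ extension z = lambdaMax M • extension z := Module.End.mem_eigenspace_iff.mp hy
  have hsum : ∑ u, extension z u = 0 := by
    have := sum_mulVec_eq_zero hM hM1 (extension z)
    rw [hMy] at this
    simpa [← Finset.mul_sum, hpos.ne'] using this
  have hsum_extend (f : V → ℝ) : ∑ i, f (v i) * z i = ∑ u, f u * extension z u := by
    refine Fintype.sum_of_injective v hv _ _ (fun u hu => ?_) fun i => by rw [hext]
    rw [show extension z u = 0 from Function.extend_apply' z _ u hu, mul_zero]
  refine ⟨z, fun hz => hy0 (by rw [hz, map_zero]), ?_, fun u => ?_⟩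
  · simpa [hsum] using hsum_extend fun _ => 1
  · have := lambdaMaxGram_mulVec_apply M (extension z) u
    rw [hMy, hsum] at this
    simpa [hsum_extend, mulVec, dotProduct] using this

end Spectral

section DistLaplacian

variable {V : Type*} [Fintype V] {G : SimpleGraph V}

lemma card_le_transmission_add_one (hG : G.Connected) (v : V) :
    Fintype.card V ≤ transmission G v + 1 := by
  classical
  calc
    Fintype.card V = ∑ _u : V, 1 := by simp
    _ ≤ ∑ u, (G.dist v u + if v = u then 1 else 0) := by
      refine Finset.sum_le_sum fun u _ => ?_
      by_cases h : v = u
      · simp [h]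
      · rw [if_neg h]
        exact hG.pos_dist_of_ne h
    _ = transmission G v + 1 := by simp [Finset.sum_add_distrib, transmission]

variable [DecidableEq V]

lemma distLaplacian_apply (G : SimpleGraph V) (u v : V) :
    distLaplacian G u v = (if u = v then (transmission G u : ℝ) else 0) - G.dist u v := by
  by_cases h : u = v <;> simp [distLaplacian, transmission, h]

lemma distLaplacian_isSymm (G : SimpleGraph V) : (distLaplacian G).IsSymm := by
  refine IsSymm.ext fun u v => ?_
  obtain rfl | h := eq_or_ne u v
  · rfl
  · rw [distLaplacian_apply, distLaplacian_apply, if_neg h, if_neg h.symm, G.dist_comm]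

lemma distLaplacian_mulVec_one (G : SimpleGraph V) : distLaplacian G *ᵥ 1 = 0 := by
  ext v
  simp [mulVec, dotProduct, distLaplacian_apply, transmission]

lemma card_le_lambdaMax_distLaplacian [Nontrivial V] (hG : G.Connected) :
    Fintype.card V ≤ lambdaMax (distLaplacian G) := by
  obtain ⟨v⟩ := hG.nonempty
  have hcard : (1 : ℝ) < Fintype.card V := by exact_mod_cast Fintype.one_lt_card
  have htrans : (Fintype.card V : ℝ) ≤ transmission G v + 1 := by
    exact_mod_cast card_le_transmission_add_one hG v
  have hRayleigh :=
    card_mul_apply_self_le (distLaplacian_isSymm G) (distLaplacian_mulVec_one G) v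
  rw [distLaplacian_apply, if_pos rfl, SimpleGraph.dist_self, Nat.cast_zero, sub_zero] at hRayleigh
  nlinarith

lemma posSemidef_lambdaMaxGram_distLaplacian [Nontrivial V] (hG : G.Connected) :
    (lambdaMaxGram (distLaplacian G)).PosSemidef :=
  posSemidef_lambdaMaxGram (distLaplacian_isSymm G) (distLaplacian_mulVec_one G)
    (card_le_lambdaMax_distLaplacian hG)

lemma lambdaMaxGram_distLaplacian_apply (G : SimpleGraph V) (u v : V) :
    lambdaMaxGram (distLaplacian G) u v =
      (if u = v then lambdaMax (distLaplacian G) - transmission G u else 0) + G.dist u v - 1 := by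
  rw [lambdaMaxGram_apply, distLaplacian_apply]
  split_ifs <;> ring

end DistLaplacian

section PlanarPath

/-- The parameters of an affinely planar Gram matrix `K` on an induced path `v₀ v₁ v₂ v₃`:
`E = d(v₀, v₃) - 1`, `h₁ = 1 / K v₁ v₁`, `h₂ = 1 / K v₂ v₂`, and `-r` is the ratio of the
coefficients of `v₃` and `v₀` in the affine dependence of the four vectors. -/
structure PlanarPath (E : ℤ) (r h₁ h₂ : ℝ) : Prop where
  E_eq : E = 1 ∨ E = 2
  r_pos : 0 < r
  h₁_pos : 0 < h₁
  h₂_pos : 0 < h₂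
  one_sub : 1 - h₂ = r * (1 - h₁)

/-- The conditions on the numbers `g i = d(vᵢ, u) - 1` for a further vertex `u` next to an induced
path `v₀ v₁ v₂ v₃` with parameters `E`, `r`, `h₁`, `h₂`. The first three come from the metric;
`ends_eq` and `star_eq` express the affine dependences among `v₀ v₁ v₂ v₃` and `v₀ v₁ v₂ u`. -/
structure PlanarPoint (E : ℤ) (r h₁ h₂ : ℝ) (g : Fin 4 → ℤ) : Prop where
  nonneg : ∀ i, 0 ≤ g i
  abs_sub_le_one : ∀ i : Fin 3, |g i.castSucc - g i.succ| ≤ 1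
  le_add : E - 1 ≤ g 0 + g 3
  ends_eq : g 0 - h₂ * g 2 = r * (g 3 - h₁ * g 1)
  star_eq : E * r * (1 - h₁ * g 1 - h₂ * g 2) = (1 - h₂) * (g 0 - h₂ * g 2)

variable {E : ℤ} {r h₁ h₂ : ℝ} {g : Fin 4 → ℤ}

lemma PlanarPath.eq_one_of_add_eq_mul (hP : PlanarPath E r h₁ h₂) {x y : ℤ} (hx : x ≤ 0)
    (hy : 0 ≤ y) (hxy : x + (1 - h₂) = r * y) : x = 0 ∧ y = 0 ∧ h₁ = 1 ∧ h₂ = 1 := by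
  obtain ⟨-, hr, hh₁, hh₂, hone⟩ := hP
  have hy' : (0 : ℝ) ≤ y := by exact_mod_cast hy
  have hx' : (-1 : ℝ) < x := by nlinarith
  norm_cast at hx'
  obtain rfl : x = 0 := by lia
  have hyh : 1 - h₁ = y := mul_left_cancel₀ hr.ne' (by rw [← hone, ← hxy, Int.cast_zero, zero_add])
  have hy₁ : (y : ℝ) < 1 := by linarith
  norm_cast at hy₁
  obtain rfl : y = 0 := by lia
  have hh₁' : h₁ = 1 := by linarith [hyh, Int.cast_zero (R := ℝ)]
  refine ⟨rfl, rfl, hh₁', ?_⟩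
  rw [hh₁', sub_self, mul_zero] at hone
  linarith

lemma PlanarPoint.eq_one_of_ne (hP : PlanarPath E r h₁ h₂) (hg : PlanarPoint E r h₁ h₂ g)
    (hne : g 1 ≠ g 2) : g 0 = g 2 ∧ g 3 = g 1 ∧ h₁ = 1 ∧ h₂ = 1 := by
  have h₀₁ : |g 0 - g 1| ≤ 1 := hg.abs_sub_le_one 0
  have h₁₂ : |g 1 - g 2| ≤ 1 := hg.abs_sub_le_one 1
  have h₂₃ : |g 2 - g 3| ≤ 1 := hg.abs_sub_le_one 2
  rw [abs_le] at h₀₁ h₁₂ h₂₃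
  have hends : (g 0 - g 2 : ℝ) + (1 - h₂) * (g 2 - g 1) = r * (g 3 - g 1) := by
    linear_combination hg.ends_eq - g 1 * hP.one_sub
  obtain hlt | hlt := hne.lt_or_gt
  · obtain ⟨hx, hy, hh⟩ := hP.eq_one_of_add_eq_mul (x := g 0 - g 2) (y := g 3 - g 1)
      (by lia) (by lia) (by push_cast [show g 2 = g 1 + 1 by lia] at hends ⊢; linarith)
    exact ⟨sub_eq_zero.mp hx, sub_eq_zero.mp hy, hh⟩
  · obtain ⟨hx, hy, hh⟩ := hP.eq_one_of_add_eq_mul (x := g 2 - g 0) (y := g 1 - g 3)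
      (by lia) (by lia) (by push_cast [show g 1 = g 2 + 1 by lia] at hends ⊢; linarith)
    exact ⟨(sub_eq_zero.mp hx).symm, (sub_eq_zero.mp hy).symm, hh⟩

lemma PlanarPoint.sub_add_sub_eq_zero (hP : PlanarPath E r 1 1) (hg : PlanarPoint E r 1 1 g) :
    (g 0 - g 1) + (g 3 - g 2) = 0 := by
  have hE : (E : ℝ) ≠ 0 := by
    obtain rfl | rfl := hP.E_eq <;> norm_num
  have hstar : 1 - (g 1 : ℝ) - g 2 = 0 := by
    simpa [hE, hP.r_pos.ne'] using hg.star_eq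
  have hstar' : 1 - g 1 - g 2 = 0 := by exact_mod_cast hstar
  obtain ⟨h₀₂, h₃₁, -, -⟩ := hg.eq_one_of_ne hP (by lia)
  rw [h₀₂, h₃₁]
  ring

lemma PlanarPath.not_both_eq_one (hP : PlanarPath E r 1 1)
    {ι : Type*} {T : Finset ι} {g : ι → Fin 4 → ℤ}
    (hg : ∀ u ∈ T, PlanarPoint E r 1 1 (g u))
    (h₀₁ : 1 - (1 + E * r) = E + ∑ u ∈ T, (g u 0 - g u 1 : ℝ))
    (h₃₂ : 1 - (1 + E / r) = E + ∑ u ∈ T, (g u 3 - g u 2 : ℝ)) : False := by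
  have hE : (0 : ℝ) < E := by
    obtain rfl | rfl := hP.E_eq <;> norm_num
  have hr := hP.r_pos
  have hsum : ∑ u ∈ T, (g u 0 - g u 1 : ℝ) + ∑ u ∈ T, (g u 3 - g u 2 : ℝ) = 0 := by
    rw [← Finset.sum_add_distrib]
    exact Finset.sum_eq_zero fun u hu => by exact_mod_cast (hg u hu).sub_add_sub_eq_zero hP
  have hEr : 0 < E * r := by positivity
  have hEr' : 0 < E / r := by positivity
  linarith

lemma eq_neg_one_of_mul_one_add_sq_eq {h : ℝ} (hh : 0 < h) {a x : ℤ} (ha : 0 ≤ a)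
    (hx : |x| ≤ 1) (hax : 0 ≤ a + x) (heq : a * (1 + h ^ 2) = 1 - (1 - h) * x) :
    x = -1 ∧ h ^ 2 + h = 1 := by
  obtain rfl | ha₀ := eq_or_ne a 0
  · obtain rfl | rfl : x = 0 ∨ x = 1 := by grind [Int.abs_le_one_iff]
    all_goals norm_num at heq
    linarith
  have ha₁ : (1 : ℝ) ≤ a := by exact_mod_cast (by lia : 1 ≤ a)
  have hle : 1 + h ^ 2 ≤ a * (1 + h ^ 2) := le_mul_of_one_le_left (by positivity) ha₁
  obtain rfl | rfl | rfl := Int.abs_le_one_iff.mp hx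
  all_goals push_cast at heq
  · nlinarith
  · nlinarith [sq_nonneg (h - 1)]
  · have ha₂ : (a : ℝ) < 2 := by nlinarith
    norm_cast at ha₂
    obtain rfl : a = 1 := by lia
    exact ⟨rfl, by push_cast at heq; linarith⟩

lemma eq_zero_or_eq_neg_one_of_mul_one_add_sq_eq {h : ℝ} (hh : 0 < h) {a x : ℤ} (ha : 0 ≤ a)
    (hx : |x| ≤ 1) (hax : 0 < a + x) (heq : a * (1 + h) ^ 2 = 2 - (1 - h) * x) :
    (x = 0 ∧ h ^ 2 + 2 * h = 1) ∨ (x = -1 ∧ 2 * h ^ 2 + 5 * h = 1) := by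
  obtain rfl | rfl | rfl := Int.abs_le_one_iff.mp hx
  all_goals push_cast at heq
  · have ha₂ : (a : ℝ) < 2 := by nlinarith
    norm_cast at ha₂
    obtain rfl : a = 1 := by lia
    exact .inl ⟨rfl, by push_cast at heq; linarith⟩
  · have ha₁ : (a : ℝ) < 1 := by nlinarith
    norm_cast at ha₁
    obtain rfl : a = 0 := by lia
    push_cast at heq
    linarith
  · have ha₃ : (a : ℝ) < 3 := by nlinarith
    norm_cast at ha₃
    obtain rfl : a = 2 := by lia
    exact .inr ⟨rfl, by push_cast at heq; linarith⟩

lemma PlanarPoint.balance_cases {h : ℝ} (hP : PlanarPath E 1 h h) (hg : PlanarPoint E 1 h h g)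
    (hne : h ≠ 1) :
    (h⁻¹ - h - 2 * E = -1 ∧ g 0 - g 1 = -1) ∨ (h⁻¹ - h - 2 * E = -2 ∧ g 0 - g 1 = 0) ∨
      (0 < h⁻¹ - h - 2 * E ∧ g 0 - g 1 = -1) := by
  have hh := hP.h₁_pos
  have h₁₂ : g 1 = g 2 := by
    by_contra h
    exact hne (hg.eq_one_of_ne hP h).2.2.1
  have h₀₃ : g 0 = g 3 := by
    have h₁₂' : (g 1 : ℝ) = g 2 := congrArg _ h₁₂
    have : (g 0 : ℝ) = g 3 := by linear_combination hg.ends_eq - h * h₁₂'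
    exact_mod_cast this
  have hx : |g 0 - g 1| ≤ 1 := hg.abs_sub_le_one 0
  have h₀ := hg.nonneg 0
  have h₁ := hg.nonneg 1
  have hstar := hg.star_eq
  rw [← h₁₂] at hstar
  have hle := hg.le_add
  rw [← h₀₃] at hle
  obtain rfl | rfl := hP.E_eq
  · obtain ⟨hx', hroot⟩ := eq_neg_one_of_mul_one_add_sq_eq hh h₁ hx (by lia)
      (by push_cast at hstar ⊢; linarith)
    refine .inl ⟨?_, hx'⟩
    field_simp
    push_cast
    linarith
  · obtain ⟨hx', hroot⟩ | ⟨hx', hroot⟩ := eq_zero_or_eq_neg_one_of_mul_one_add_sq_eq hh h₁ hx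
      (by lia) (by push_cast at hstar ⊢; linarith)
    · refine .inr (.inl ⟨?_, hx'⟩)
      field_simp
      push_cast
      linarith
    · refine .inr (.inr ⟨?_, hx'⟩)
      have : h⁻¹ = 2 * h + 5 := by
        field_simp
        linarith
      push_cast
      linarith

lemma card_le_one_of_balance_cases {ι : Type*} {T : Finset ι} {x : ι → ℤ} {S : ℝ}
    (hsum : S = ∑ u ∈ T, (x u : ℝ))
    (h : ∀ u ∈ T, (S = -1 ∧ x u = -1) ∨ (S = -2 ∧ x u = 0) ∨ (0 < S ∧ x u = -1)) :
    T.card ≤ 1 := by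
  have hS : S ≤ 0 := by
    rw [hsum]
    refine Finset.sum_nonpos fun u hu => ?_
    obtain ⟨-, hx⟩ | ⟨-, hx⟩ | ⟨-, hx⟩ := h u hu <;> norm_num [hx]
  obtain rfl | ⟨u, hu⟩ := T.eq_empty_or_nonempty
  · simp
  obtain ⟨hS₁, -⟩ | ⟨hS₂, -⟩ | ⟨hS₀, -⟩ := h u hu
  · have hx : ∀ u ∈ T, (x u : ℝ) = -1 := fun u hu => by
      obtain ⟨-, hx⟩ | ⟨hS₂, -⟩ | ⟨hS₀, -⟩ := h u hu
      · simp [hx]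
      all_goals linarith
    rw [Finset.sum_congr rfl hx, hS₁] at hsum
    simp only [Finset.sum_const, nsmul_eq_mul, mul_neg, mul_one, neg_inj] at hsum
    exact_mod_cast hsum.ge
  · have hx : ∀ u ∈ T, (x u : ℝ) = 0 := fun u hu => by
      obtain ⟨hS₁, -⟩ | ⟨-, hx⟩ | ⟨hS₀, -⟩ := h u hu
      · linarith
      · simp [hx]
      · linarith
    rw [Finset.sum_congr rfl hx, hS₂] at hsum
    simp at hsum
  · exact absurd hS hS₀.not_ge

theorem PlanarPath.card_le_one (hP : PlanarPath E r h₁ h₂) {ι : Type*} {T : Finset ι}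
    {g : ι → Fin 4 → ℤ} (hg : ∀ u ∈ T, PlanarPoint E r h₁ h₂ (g u))
    (h₀₁ : h₁⁻¹ - (h₂ + E * r) = E + ∑ u ∈ T, (g u 0 - g u 1 : ℝ))
    (h₃₂ : h₂⁻¹ - (h₁ + E / r) = E + ∑ u ∈ T, (g u 3 - g u 2 : ℝ))
    (h₁₂ : h₂⁻¹ - h₁⁻¹ = ∑ u ∈ T, (g u 1 - g u 2 : ℝ)) : T.card ≤ 1 := by
  by_cases hone : h₁ = 1 ∧ h₂ = 1
  · obtain ⟨rfl, rfl⟩ := hone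
    rw [inv_one] at h₀₁ h₃₂
    exact (hP.not_both_eq_one hg h₀₁ h₃₂).elim
  have hg₁₂ : ∀ u ∈ T, (g u 1 - g u 2 : ℝ) = 0 := fun u hu => by
    by_contra h
    exact hone ((hg u hu).eq_one_of_ne hP (by simpa [sub_eq_zero] using h)).2.2
  rw [Finset.sum_eq_zero hg₁₂, sub_eq_zero] at h₁₂
  obtain rfl : h₂ = h₁ := inv_injective h₁₂
  have hh : h₂ ≠ 1 := by simpa using hone
  obtain rfl : 1 = r :=
    mul_right_cancel₀ (sub_ne_zero.mpr hh.symm) ((one_mul _).trans hP.one_sub)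
  refine card_le_one_of_balance_cases (x := fun u => g u 0 - g u 1) (S := h₂⁻¹ - h₂ - 2 * E) ?_
    fun u hu => (hg u hu).balance_cases hP hh
  push_cast
  linarith

end PlanarPath

section GramPath

/-- For the Gram matrix `K` of a family of vectors: any four of these vectors lie in an affine
plane. A combination of the vectors with coefficients `z` vanishes if and only if `K z = 0`. -/
def AffinelyPlanar {V : Type*} (K : Matrix V V ℝ) : Prop :=
  ∀ v : Fin 4 → V, v.Injective →
    ∃ z : Fin 4 → ℝ, z ≠ 0 ∧ ∑ i, z i = 0 ∧ ∀ u, ∑ i, K u (v i) * z i = 0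

/-- The entries `K u w = d(u, w) - 1` of a Gram matrix on the vertices of an induced path
`v 0, v 1, v 2, v 3`, where `E = d(v 0, v 3) - 1`. -/
structure GramPath {V : Type*} (K : Matrix V V ℝ) (v : Fin 4 → V) (E : ℤ) : Prop where
  E_eq : E = 1 ∨ E = 2
  injective : v.Injective
  apply_zero_one : K (v 0) (v 1) = 0
  apply_one_two : K (v 1) (v 2) = 0
  apply_two_three : K (v 2) (v 3) = 0
  apply_zero_two : K (v 0) (v 2) = 1
  apply_one_three : K (v 1) (v 3) = 1
  apply_zero_three : K (v 0) (v 3) = E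

variable {V : Type*} {K : Matrix V V ℝ} {v : Fin 4 → V} {E : ℤ}

lemma apply_self_pos_of_posSemidef (hK : K.PosSemidef) {u w : V} (h : K u w ≠ 0) :
    0 < K u u := by
  refine hK.diag_nonneg.lt_of_ne' fun hu => ?_
  have hminor := sq_apply_le_of_posSemidef hK u w
  rw [hu, zero_mul] at hminor
  exact hminor.not_gt (by positivity)

lemma GramPath.coe_pos (hv : GramPath K v E) : (0 : ℝ) < E := by
  obtain rfl | rfl := hv.E_eq <;> norm_num

lemma GramPath.apply_one_one_pos (hv : GramPath K v E) (hK : K.PosSemidef) :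
    0 < K (v 1) (v 1) :=
  apply_self_pos_of_posSemidef hK (w := v 3) (by rw [hv.apply_one_three]; exact one_ne_zero)

lemma GramPath.apply_two_two_pos (hv : GramPath K v E) (hK : K.PosSemidef) :
    0 < K (v 2) (v 2) :=
  apply_self_pos_of_posSemidef hK (w := v 0)
    (by rw [apply_comm_of_posSemidef hK, hv.apply_zero_two]; exact one_ne_zero)

lemma GramPath.exists_dependence (hv : GramPath K v E) (hK : K.PosSemidef)
    (hplanar : AffinelyPlanar K) :
    ∃ r, 1 - (K (v 2) (v 2))⁻¹ = r * (1 - (K (v 1) (v 1))⁻¹) ∧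
      ∀ u, K u (v 0) - (K (v 2) (v 2))⁻¹ * K u (v 2) =
        r * (K u (v 3) - (K (v 1) (v 1))⁻¹ * K u (v 1)) := by
  have hsymm := apply_comm_of_posSemidef hK
  have hβ₁ := hv.apply_one_one_pos hK
  have hβ₂ := hv.apply_two_two_pos hK
  obtain ⟨z, hz, hsum, hrow⟩ := hplanar v hv.injective
  simp only [Fin.sum_univ_four] at hsum hrow
  have hrow₀ : K (v 0) (v 0) * z 0 + z 2 + E * z 3 = 0 := by
    simpa [hv.apply_zero_one, hv.apply_zero_two, hv.apply_zero_three] using hrow (v 0)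
  have hrow₁ : K (v 1) (v 1) * z 1 + z 3 = 0 := by
    simpa [hsymm (v 1) (v 0), hv.apply_zero_one, hv.apply_one_two, hv.apply_one_three]
      using hrow (v 1)
  have hrow₂ : z 0 + K (v 2) (v 2) * z 2 = 0 := by
    simpa [hsymm (v 2) (v 0), hsymm (v 2) (v 1), hv.apply_zero_two, hv.apply_one_two,
      hv.apply_two_three] using hrow (v 2)
  have hz₁ : z 1 = -((K (v 1) (v 1))⁻¹ * z 3) := by
    field_simp
    linarith
  have hz₂ : z 2 = -((K (v 2) (v 2))⁻¹ * z 0) := by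
    field_simp
    linarith
  have hz₀ : z 0 ≠ 0 := by
    intro h
    rw [h, mul_zero, neg_zero] at hz₂
    have hz₃ : z 3 = 0 := by simpa [h, hz₂, hv.coe_pos.ne'] using hrow₀
    rw [hz₃, mul_zero, neg_zero] at hz₁
    exact hz (funext fun i => by fin_cases i <;> assumption)
  obtain ⟨r, hr⟩ : ∃ r, z 3 = -(r * z 0) := ⟨-(z 3 / z 0), by field_simp⟩
  simp only [hz₁, hz₂, hr] at hsum hrow
  exact ⟨r, mul_right_cancel₀ hz₀ (by linear_combination hsum),
    fun u => mul_right_cancel₀ hz₀ (by linear_combination hrow u)⟩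

lemma GramPath.exists_planarPath (hv : GramPath K v E) (hK : K.PosSemidef)
    (hplanar : AffinelyPlanar K) :
    ∃ r, PlanarPath E r (K (v 1) (v 1))⁻¹ (K (v 2) (v 2))⁻¹ ∧
      K (v 0) (v 0) = (K (v 2) (v 2))⁻¹ + E * r ∧
      K (v 3) (v 3) = (K (v 1) (v 1))⁻¹ + E / r ∧
      ∀ u, K u (v 0) - (K (v 2) (v 2))⁻¹ * K u (v 2) =
        r * (K u (v 3) - (K (v 1) (v 1))⁻¹ * K u (v 1)) := by
  have hsymm := apply_comm_of_posSemidef hK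
  have hβ₁ := hv.apply_one_one_pos hK
  have hβ₂ := hv.apply_two_two_pos hK
  have hE := hv.coe_pos
  obtain ⟨r, hone, hrow⟩ := hv.exists_dependence hK hplanar
  have hβ₀ : K (v 0) (v 0) = (K (v 2) (v 2))⁻¹ + E * r := by
    have hrow₀ := hrow (v 0)
    rw [hv.apply_zero_one, hv.apply_zero_two, hv.apply_zero_three] at hrow₀
    linarith
  have hβ₃ : E = r * (K (v 3) (v 3) - (K (v 1) (v 1))⁻¹) := by
    have hrow₃ := hrow (v 3)
    rw [hsymm (v 3) (v 0), hsymm (v 3) (v 1), hsymm (v 3) (v 2), hv.apply_one_three,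
      hv.apply_two_three, hv.apply_zero_three] at hrow₃
    linarith
  have hr : 0 < r := by
    have hle : (K (v 2) (v 2))⁻¹ ≤ K (v 0) (v 0) := by
      rw [inv_le_iff_one_le_mul₀ hβ₂]
      simpa [hv.apply_zero_two] using sq_apply_le_of_posSemidef hK (v 0) (v 2)
    have hr₀ : r ≠ 0 := by
      rintro rfl
      linarith
    exact lt_of_le_of_ne' (nonneg_of_mul_nonneg_right (by linarith) hE) hr₀
  refine ⟨r, ⟨hv.E_eq, hr, inv_pos.mpr hβ₁, inv_pos.mpr hβ₂, hone⟩, hβ₀, ?_, hrow⟩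
  rw [hβ₃, mul_div_cancel_left₀ _ hr.ne', add_sub_cancel]

lemma injective_replace_last {α : Type*} {v : Fin 4 → α} (hv : v.Injective) {u : α}
    (hu : u ∉ Set.range v) : Function.Injective ![v 0, v 1, v 2, u] := by
  simp only [Set.mem_range, not_exists] at hu
  intro i j h
  fin_cases i <;> fin_cases j <;> simp_all [hv.eq_iff, eq_comm]

lemma GramPath.star_eq (hv : GramPath K v E) (hK : K.PosSemidef) (hplanar : AffinelyPlanar K)
    {r : ℝ} (hβ₀ : K (v 0) (v 0) = (K (v 2) (v 2))⁻¹ + E * r) (hr : r ≠ 0) {u : V}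
    (hu : u ∉ Set.range v) :
    E * r * (1 - (K (v 1) (v 1))⁻¹ * K (v 1) u - (K (v 2) (v 2))⁻¹ * K (v 2) u) =
      (1 - (K (v 2) (v 2))⁻¹) * (K (v 0) u - (K (v 2) (v 2))⁻¹ * K (v 2) u) := by
  have hsymm := apply_comm_of_posSemidef hK
  have hβ₁ := hv.apply_one_one_pos hK
  have hβ₂ := hv.apply_two_two_pos hK
  obtain ⟨w, hw, hsum, hrow⟩ := hplanar _ (injective_replace_last hv.injective hu)
  simp only [Fin.sum_univ_four, cons_val] at hsum hrow
  have hrow₀ : K (v 0) (v 0) * w 0 + w 2 + K (v 0) u * w 3 = 0 := by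
    simpa [hv.apply_zero_one, hv.apply_zero_two] using hrow (v 0)
  have hrow₁ : K (v 1) (v 1) * w 1 + K (v 1) u * w 3 = 0 := by
    simpa [hsymm (v 1) (v 0), hv.apply_zero_one, hv.apply_one_two] using hrow (v 1)
  have hrow₂ : w 0 + K (v 2) (v 2) * w 2 + K (v 2) u * w 3 = 0 := by
    simpa [hsymm (v 2) (v 0), hsymm (v 2) (v 1), hv.apply_zero_two, hv.apply_one_two]
      using hrow (v 2)
  have hw₁ : w 1 = -((K (v 1) (v 1))⁻¹ * K (v 1) u * w 3) := by
    field_simp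
    linarith
  have hw₂ : w 2 = -((K (v 2) (v 2))⁻¹ * (w 0 + K (v 2) u * w 3)) := by
    field_simp
    linarith
  have hw₀ : E * r * w 0 = -((K (v 0) u - (K (v 2) (v 2))⁻¹ * K (v 2) u) * w 3) := by
    rw [hβ₀, hw₂] at hrow₀
    linarith
  have hw₃ : w 3 ≠ 0 := by
    intro h
    have h₀ : w 0 = 0 := by simpa [h, hv.coe_pos.ne', hr] using hw₀
    rw [h, mul_zero, neg_zero] at hw₁
    rw [h, h₀, mul_zero, add_zero, mul_zero, neg_zero] at hw₂
    exact hw (funext fun i => by fin_cases i <;> assumption)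
  rw [hw₁, hw₂] at hsum
  exact mul_right_cancel₀ hw₃
    (by linear_combination E * r * hsum - (1 - (K (v 2) (v 2))⁻¹) * hw₀)

lemma GramPath.sum_add_sum_compl_image_eq_zero [Fintype V] [DecidableEq V] (hv : GramPath K v E)
    {c : ℝ} (hc : ∀ u, ∑ x, K u x = c) (i j : Fin 4) :
    ∑ k, (K (v i) (v k) - K (v j) (v k)) +
      ∑ u ∈ (Finset.univ.image v)ᶜ, (K (v i) u - K (v j) u) = 0 := by
  rw [← Finset.sum_image hv.injective.injOn (f := fun u => K (v i) u - K (v j) u),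
    Finset.sum_add_sum_compl, Finset.sum_sub_distrib, hc, hc, sub_self]

lemma GramPath.apply_self_sub_apply_self [Fintype V] [DecidableEq V] (hv : GramPath K v E)
    (hK : K.PosSemidef) {c : ℝ} (hc : ∀ u, ∑ x, K u x = c) :
    K (v 1) (v 1) - K (v 0) (v 0) =
        E + ∑ u ∈ (Finset.univ.image v)ᶜ, (K (v 0) u - K (v 1) u) ∧
      K (v 2) (v 2) - K (v 3) (v 3) =
        E + ∑ u ∈ (Finset.univ.image v)ᶜ, (K (v 3) u - K (v 2) u) ∧
      K (v 2) (v 2) - K (v 1) (v 1) =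
        ∑ u ∈ (Finset.univ.image v)ᶜ, (K (v 1) u - K (v 2) u) := by
  have hsymm := apply_comm_of_posSemidef hK
  have h₀₁ := hv.sum_add_sum_compl_image_eq_zero hc 0 1
  have h₃₂ := hv.sum_add_sum_compl_image_eq_zero hc 3 2
  have h₁₂ := hv.sum_add_sum_compl_image_eq_zero hc 1 2
  simp only [Fin.sum_univ_four, hsymm (v 1) (v 0), hsymm (v 2) (v 0), hsymm (v 3) (v 0),
    hsymm (v 2) (v 1), hsymm (v 3) (v 1), hsymm (v 3) (v 2), hv.apply_zero_one, hv.apply_one_two,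
    hv.apply_two_three, hv.apply_zero_two, hv.apply_one_three, hv.apply_zero_three]
    at h₀₁ h₃₂ h₁₂
  refine ⟨?_, ?_, ?_⟩ <;> linarith

theorem GramPath.card_le_five [Fintype V] (hv : GramPath K v E) (hK : K.PosSemidef)
    (hplanar : AffinelyPlanar K) {c : ℝ} (hc : ∀ u, ∑ x, K u x = c) {g : V → Fin 4 → ℤ}
    (hg : ∀ u ∉ Set.range v, ∀ i, K (v i) u = g u i)
    (hnonneg : ∀ u ∉ Set.range v, ∀ i, 0 ≤ g u i)
    (habs : ∀ u, ∀ i : Fin 3, |g u i.castSucc - g u i.succ| ≤ 1)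
    (hadd : ∀ u, E - 1 ≤ g u 0 + g u 3) : Fintype.card V ≤ 5 := by
  classical
  obtain ⟨r, hP, hβ₀, hβ₃, hends⟩ := hv.exists_planarPath hK hplanar
  obtain ⟨h₀₁, h₃₂, h₁₂⟩ := hv.apply_self_sub_apply_self hK hc
  have hnotMem : ∀ u ∈ (Finset.univ.image v)ᶜ, u ∉ Set.range v := by simp
  have hpoint : ∀ u ∈ (Finset.univ.image v)ᶜ,
      PlanarPoint E r (K (v 1) (v 1))⁻¹ (K (v 2) (v 2))⁻¹ (g u) := fun u hu => by
    have hu := hnotMem u hu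
    refine ⟨hnonneg u hu, habs u, hadd u, ?_, ?_⟩
    · simpa only [apply_comm_of_posSemidef hK u, hg u hu] using hends u
    · simpa only [hg u hu] using hv.star_eq hK hplanar hβ₀ hP.r_pos.ne' hu
  have hsum (i j : Fin 4) : ∑ u ∈ (Finset.univ.image v)ᶜ, (g u i - g u j : ℝ) =
      ∑ u ∈ (Finset.univ.image v)ᶜ, (K (v i) u - K (v j) u) :=
    Finset.sum_congr rfl fun u hu => by rw [hg u (hnotMem u hu), hg u (hnotMem u hu)]
  have hcompl : (Finset.univ.image v)ᶜ.card ≤ 1 :=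
    hP.card_le_one hpoint (by rw [hsum, inv_inv, ← hβ₀, h₀₁])
      (by rw [hsum, inv_inv, ← hβ₃, h₃₂]) (by rw [hsum, inv_inv, inv_inv, h₁₂])
  rw [Finset.card_compl, Finset.card_image_of_injective _ hv.injective, Finset.card_univ,
    Fintype.card_fin] at hcompl
  lia

end GramPath

section InducedPath

open SimpleGraph

variable {V : Type*} [Fintype V] [DecidableEq V] {G : SimpleGraph V}

lemma lambdaMaxGram_distLaplacian_apply_of_ne (G : SimpleGraph V) {u v : V} (h : u ≠ v) :
    lambdaMaxGram (distLaplacian G) u v = (G.dist u v - 1 : ℤ) := by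
  rw [lambdaMaxGram_distLaplacian_apply, if_neg h]
  push_cast
  ring

lemma sum_lambdaMaxGram_distLaplacian (G : SimpleGraph V) (u : V) :
    ∑ v, lambdaMaxGram (distLaplacian G) u v = lambdaMax (distLaplacian G) - Fintype.card V := by
  have := lambdaMaxGram_mulVec_apply (distLaplacian G) 1 u
  rw [distLaplacian_mulVec_one] at this
  simpa [mulVec, dotProduct] using this

lemma affinelyPlanar_lambdaMaxGram_distLaplacian [Nontrivial V] (hG : G.Connected)
    (hmult : Fintype.card V ≤ eigMult (distLaplacian G) (lambdaMax (distLaplacian G)) + 3) :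
    AffinelyPlanar (lambdaMaxGram (distLaplacian G)) := fun v hv =>
  have hpos : 0 < lambdaMax (distLaplacian G) :=
    (Nat.cast_pos.mpr Fintype.card_pos).trans_le (card_le_lambdaMax_distLaplacian hG)
  exists_affine_dependence (distLaplacian_isSymm G) (distLaplacian_mulVec_one G) hpos hv
    (by rw [Fintype.card_fin]; lia)

lemma gramPath_lambdaMaxGram_distLaplacian (hG : G.Connected) (φ : pathGraph 4 ↪g G) :
    GramPath (lambdaMaxGram (distLaplacian G)) φ (G.dist (φ 0) (φ 3) - 1) := by
  have hadj (i j : Fin 4) : G.Adj (φ i) (φ j) ↔ i.val + 1 = j.val ∨ j.val + 1 = i.val :=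
    φ.map_adj_iff.trans pathGraph_adj
  have hne {i j : Fin 4} (h : i ≠ j) : φ i ≠ φ j := φ.injective.ne h
  have h₀₁ : G.dist (φ 0) (φ 1) = 1 := dist_eq_one_iff_adj.mpr (by simp [hadj])
  have h₁₂ : G.dist (φ 1) (φ 2) = 1 := dist_eq_one_iff_adj.mpr (by simp [hadj])
  have h₂₃ : G.dist (φ 2) (φ 3) = 1 := dist_eq_one_iff_adj.mpr (by simp [hadj])
  have h₀₂ : G.dist (φ 0) (φ 2) = 2 :=
    dist_eq_two_of_adj_of_adj (w := φ 1) (by simp [hadj]) (by simp [hadj]) (hne (by decide))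
      (by simp [hadj])
  have h₁₃ : G.dist (φ 1) (φ 3) = 2 :=
    dist_eq_two_of_adj_of_adj (w := φ 2) (by simp [hadj]) (by simp [hadj]) (hne (by decide))
      (by simp [hadj])
  have h₀₃ : G.dist (φ 0) (φ 3) = 2 ∨ G.dist (φ 0) (φ 3) = 3 := by
    have hpos := hG.pos_dist_of_ne (hne (show (0 : Fin 4) ≠ 3 by decide))
    have hone : G.dist (φ 0) (φ 3) ≠ 1 := dist_eq_one_iff_adj.not.mpr (by simp [hadj])
    have htri := hG.dist_triangle (u := φ 0) (v := φ 1) (w := φ 3)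
    lia
  refine ⟨by lia, φ.injective, ?_, ?_, ?_, ?_, ?_, ?_⟩
  all_goals rw [lambdaMaxGram_distLaplacian_apply_of_ne G (hne (by decide))]
  all_goals simp only [*]
  all_goals norm_num

theorem card_le_five_of_affinelyPlanar [Nontrivial V] (hG : G.Connected)
    (hP₄ : (pathGraph 4).IsIndContained G)
    (hplanar : AffinelyPlanar (lambdaMaxGram (distLaplacian G))) : Fintype.card V ≤ 5 := by
  obtain ⟨φ⟩ := hP₄
  refine (gramPath_lambdaMaxGram_distLaplacian hG φ).card_le_five
    (posSemidef_lambdaMaxGram_distLaplacian hG) hplanar (sum_lambdaMaxGram_distLaplacian G)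
    (g := fun u i => G.dist (φ i) u - 1) (fun u hu i => ?_) (fun u hu i => ?_) (fun u i => ?_)
    fun u => ?_
  · exact lambdaMaxGram_distLaplacian_apply_of_ne G fun h => hu ⟨i, h⟩
  · have := hG.pos_dist_of_ne fun h => hu ⟨i, h⟩
    lia
  · rw [sub_sub_sub_cancel_right]
    exact abs_dist_sub_dist_le_one_of_adj (φ.map_adj_iff.mpr (by simp [pathGraph_adj])) u
  · have := hG.dist_triangle (u := φ 0) (v := u) (w := φ 3)
    rw [G.dist_comm (u := u)] at this
    lia

end InducedPath

theorem compl_disconnected_of_multiplicity_eq_sub_three_general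
    {V : Type*} [Fintype V] [DecidableEq V] (hcard : 6 ≤ Fintype.card V) (G : SimpleGraph V)
    (hG : G.Connected)
    (hmult : Fintype.card V ≤ eigMult (distLaplacian G) (lambdaMax (distLaplacian G)) + 3) :
    ¬ Gᶜ.Connected ∧
      ∃ A B : Set V, A.Nonempty ∧ B.Nonempty ∧ A ∩ B = ∅ ∧ A ∪ B = Set.univ ∧
        G.IsCompleteBetween A B := by
  have : Nontrivial V := Fintype.one_lt_card_iff_nontrivial.mp (by lia)
  have hGc : ¬ Gᶜ.Connected := fun hGc => by
    have hP₄ := pathGraph_four_isIndContained_of_connected_of_compl_connected hG hGc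
    have := card_le_five_of_affinelyPlanar hG hP₄
      (affinelyPlanar_lambdaMaxGram_distLaplacian hG hmult)
    lia
  exact ⟨hGc, exists_isCompleteBetween_of_not_compl_connected hGc⟩

/-- If `G` is a connected graph on `n ≥ 6` vertices whose largest distance
Laplacian eigenvalue has multiplicity `n - 3`, then the complement of `G` is disconnected;
equivalently, `G` is the join of two nonempty graphs. -/
theorem compl_disconnected_of_multiplicity_eq_sub_three
    (n : ℕ) (hn : 6 ≤ n) (G : SimpleGraph (Fin n)) (hG : G.Connected)
    (hmult : eigMult (distLaplacian G) (lambdaMax (distLaplacian G)) = n - 3) :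
    ¬ Gᶜ.Connected ∧
      ∃ A B : Set (Fin n), A.Nonempty ∧ B.Nonempty ∧ A ∩ B = ∅ ∧ A ∪ B = Set.univ ∧
        ∀ a ∈ A, ∀ b ∈ B, G.Adj a b := by
  exact compl_disconnected_of_multiplicity_eq_sub_three_general
    (by rwa [Fintype.card_fin]) G hG (by rw [Fintype.card_fin]; lia)
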